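/- Let p̄ = (p(1), p(2), …) be a sequence of reals with 0 ≤ p(i) < 1 for all i, such that log(∏_{i=1}^n (1 − p(i))) / log n → 0 as n → ∞. Then for every first-order sentence ψ of the language L, the limit lim_{n→∞} Prob(n,p̄;ψ) exists and equals 0 or 1. -/

import Mathlib

open FirstOrder Filter

namespace RandomGraph

/-- The set of potential edges of a graph on `Fin n` (pairs `(v,w)` with `v < w`).
Vertex `v : Fin n` represents the number `v + 1` of the interval `[n] = {1, …, n}`. -/
abbrev EdgeIdx (n : ℕ) := {e : Fin n × Fin n // e.1 < e.2}

/-- An outcome of the random graph on `[n]`: a choice of which potential edges are present. -/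
abbrev Sample (n : ℕ) := EdgeIdx n → Bool

/-- Adjacency of two vertices (described by their values in `Fin n`) in the outcome `ω`. -/
def adjVal {n : ℕ} (ω : Sample n) (a b : ℕ) : Prop :=
  ∃ e : EdgeIdx n, ω e = true ∧
    ((e.1.1.val = a ∧ e.1.2.val = b) ∨ (e.1.1.val = b ∧ e.1.2.val = a))

/-- Adjacency of two vertices in the outcome `ω`. -/
def sampleAdj {n : ℕ} (ω : Sample n) (v w : Fin n) : Prop := adjVal ω v.val w.val

/-- The probability of the outcome `ω` in the model `G(n, p̄)`: each pair of distinct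
vertices at distance `d` is an edge with probability `p d`, independently.  (The value `p 0` is
never used, since distinct vertices are at distance at least 1.) -/
noncomputable def sampleWeight (p : ℕ → ℝ) {n : ℕ} (ω : Sample n) : ℝ :=
  ∏ e : EdgeIdx n,
    (if ω e then p (e.1.2.val - e.1.1.val) else 1 - p (e.1.2.val - e.1.1.val))

/-- The probability of the outcome `ω` in the circular model `C(n, p̄)`: vertices `v, w` are
adjacent with probability `p (min |v-w| (n - |v-w|))`, independently. -/
noncomputable def cWeight (p : ℕ → ℝ) {n : ℕ} (ω : Sample n) : ℝ :=
  ∏ e : EdgeIdx n,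
    (if ω e then p (min (e.1.2.val - e.1.1.val) (n - (e.1.2.val - e.1.1.val)))
      else 1 - p (min (e.1.2.val - e.1.1.val) (n - (e.1.2.val - e.1.1.val))))

open scoped Classical in
/-- The probability of the event `P` in the random graph `G(n, p̄)`. -/
noncomputable def Pr (p : ℕ → ℝ) (n : ℕ) (P : Sample n → Prop) : ℝ :=
  ∑ ω : Sample n, if P ω then sampleWeight p ω else 0

open scoped Classical in
/-- The probability of the event `P` in the circular random graph `C(n, p̄)`. -/
noncomputable def cPr (p : ℕ → ℝ) (n : ℕ) (P : Sample n → Prop) : ℝ :=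
  ∑ ω : Sample n, if P ω then cWeight p ω else 0

/-! ### The language `L` of graphs (also used as the language `L^c`) -/

/-- An outcome `ω` of the random graph, viewed as a structure of `FirstOrder.Language.graph`,
the language with a single binary adjacency predicate. -/
def graphStructure {n : ℕ} (ω : Sample n) : Language.graph.Structure (Fin n) where
  RelMap | .adj => fun x => sampleAdj ω (x 0) (x 1)

/-- Satisfaction of a sentence of the language `L` in the outcome `ω`. -/
def SatL {n : ℕ} (ω : Sample n) (ψ : Language.graph.Sentence) : Prop :=
  @Language.Sentence.Realize _ _ (graphStructure ω) ψ

/-- `Prob(n, p̄; ψ)` for a sentence `ψ` of the language `L`. -/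
noncomputable def ProbL (p : ℕ → ℝ) (n : ℕ) (ψ : Language.graph.Sentence) : ℝ :=
  Pr p n fun ω => SatL ω ψ

/-- The probability that `C(n, p̄)` satisfies a sentence `ψ` of the language `L^c = L`. -/
noncomputable def cProbL (p : ℕ → ℝ) (n : ℕ) (ψ : Language.graph.Sentence) : ℝ :=
  cPr p n fun ω => SatL ω ψ

/-! ### The language `L₊` -/

/-- The constants of the language `L₊`: the first element `1` and the last element `n`. -/
inductive plusFunc : ℕ → Type
  | one : plusFunc 0
  | last : plusFunc 0

/-- The relations of `L₊`: adjacency and successor. -/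
inductive plusRel : ℕ → Type
  | adj : plusRel 2
  | succ : plusRel 2

/-- The language `L₊` with adjacency, successor (`x = y + 1`), and constants `1` and `n`. -/
def Lplus : Language := ⟨plusFunc, plusRel⟩

/-- An outcome `ω` of the random graph on `[m+1]`, as an `L₊`-structure. -/
def plusStructure {m : ℕ} (ω : Sample (m + 1)) : Lplus.Structure (Fin (m + 1)) where
  funMap | .one => fun _ => 0 | .last => fun _ => Fin.last m
  RelMap
    | .adj => fun x => sampleAdj ω (x 0) (x 1)
    | .succ => fun x => (x 0).val = (x 1).val + 1

/-- `Prob(n, p̄; ψ)` for a sentence `ψ` of `L₊` (set to `0` in the irrelevant case `n = 0`,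
where the constants cannot be interpreted). -/
noncomputable def ProbPlus (p : ℕ → ℝ) : ℕ → Lplus.Sentence → ℝ
  | 0, _ => 0
  | (m + 1), ψ => Pr p (m + 1) fun ω => @Language.Sentence.Realize _ _ (plusStructure ω) ψ

/-! ### The language `L≤` -/

/-- The relations of `L≤`: adjacency and linear order. -/
inductive leRel : ℕ → Type
  | adj : leRel 2
  | le : leRel 2

/-- The language `L≤` with adjacency and a linear order. -/
def Lle : Language := ⟨fun _ => Empty, leRel⟩

/-- An outcome `ω` of the random graph on `[n]`, as an `L≤`-structure. -/
def leStructure {n : ℕ} (ω : Sample n) : Lle.Structure (Fin n) where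
  funMap := fun f _ => Empty.elim f
  RelMap
    | .adj => fun x => sampleAdj ω (x 0) (x 1)
    | .le => fun x => x 0 ≤ x 1

/-- Satisfaction of a sentence of `L≤` in the outcome `ω`. -/
def SatLe {n : ℕ} (ω : Sample n) (ψ : Lle.Sentence) : Prop :=
  @Language.Sentence.Realize _ _ (leStructure ω) ψ

/-- `Prob(n, p̄; ψ)` for a sentence `ψ` of `L≤`. -/
noncomputable def ProbLe (p : ℕ → ℝ) (n : ℕ) (ψ : Lle.Sentence) : ℝ :=
  Pr p n fun ω => SatLe ω ψ

/-! ### The circular languages `L₊^c` and `L≤^c` -/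

/-- The relations of `L₊^c`: adjacency and cyclic successor. -/
inductive plusCRel : ℕ → Type
  | adj : plusCRel 2
  | succ : plusCRel 2

/-- The language `L₊^c`, with adjacency and cyclic successor (`x = y + 1 (mod n)`). -/
def LplusC : Language := ⟨fun _ => Empty, plusCRel⟩

/-- An outcome `ω` of the circular random graph on `[n]`, as an `L₊^c`-structure. -/
def plusCStructure {n : ℕ} (ω : Sample n) : LplusC.Structure (Fin n) where
  funMap := fun f _ => Empty.elim f
  RelMap
    | .adj => fun x => sampleAdj ω (x 0) (x 1)
    | .succ => fun x => (x 0).val = ((x 1).val + 1) % n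

/-- The probability that `C(n, p̄)` satisfies a sentence `ψ` of the language `L₊^c`. -/
noncomputable def cProbPlus (p : ℕ → ℝ) (n : ℕ) (ψ : LplusC.Sentence) : ℝ :=
  cPr p n fun ω => @Language.Sentence.Realize _ _ (plusCStructure ω) ψ

/-- The relations of `L≤^c`: adjacency and the ternary clockwise-order predicate. -/
inductive cycRel : ℕ → Type
  | adj : cycRel 2
  | btw : cycRel 3

/-- The language `L≤^c`, with adjacency and the ternary clockwise-order predicate `C`. -/
def Lcyc : Language := ⟨fun _ => Empty, cycRel⟩

/-- `C(a, b, c)`: `a ≤ b ≤ c` holds after some cyclic permutation of `(a, b, c)`. -/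
def cyclicBtw {n : ℕ} (a b c : Fin n) : Prop :=
  (a ≤ b ∧ b ≤ c) ∨ (b ≤ c ∧ c ≤ a) ∨ (c ≤ a ∧ a ≤ b)

/-- An outcome `ω` of the circular random graph on `[n]`, as an `L≤^c`-structure. -/
def cycStructure {n : ℕ} (ω : Sample n) : Lcyc.Structure (Fin n) where
  funMap := fun f _ => Empty.elim f
  RelMap
    | .adj => fun x => sampleAdj ω (x 0) (x 1)
    | .btw => fun x => cyclicBtw (x 0) (x 1) (x 2)

/-- Satisfaction of a sentence of `L≤^c` in the outcome `ω`. -/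
def SatCyc {n : ℕ} (ω : Sample n) (ψ : Lcyc.Sentence) : Prop :=
  @Language.Sentence.Realize _ _ (cycStructure ω) ψ

/-- The probability that `C(n, p̄)` satisfies a sentence `ψ` of the language `L≤^c`. -/
noncomputable def cProbCyc (p : ℕ → ℝ) (n : ℕ) (ψ : Lcyc.Sentence) : ℝ :=
  cPr p n fun ω => SatCyc ω ψ


/-! ### Ehrenfeucht–Fraïssé games on graphs -/

/-- A bundled set with a binary relation. -/
structure Gr where
  V : Type
  r : V → V → Prop

/-- `P` is a partial isomorphism. -/
def PIso {A B : Gr} (P : Set (A.V × B.V)) : Prop :=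
  ∀ x ∈ P, ∀ y ∈ P, (x.1 = y.1 ↔ x.2 = y.2) ∧ (A.r x.1 y.1 ↔ B.r x.2 y.2)

/-- Duplicator wins the `k`-round game from position `P`. -/
def EF {A B : Gr} : ℕ → Set (A.V × B.V) → Prop
  | 0, P => PIso P
  | k + 1, P => PIso P ∧ (∀ x, ∃ y, EF k (insert (x, y) P)) ∧ (∀ y, ∃ x, EF k (insert (x, y) P))

theorem EF.piso {A B : Gr} {k : ℕ} {P : Set (A.V × B.V)} (h : EF k P) : PIso P := by
  cases k with
  | zero => exact h
  | succ k => exact h.1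

theorem PIso.mono {A B : Gr} {P Q : Set (A.V × B.V)} (hPQ : P ⊆ Q) (h : PIso Q) : PIso P :=
  fun x hx y hy => h x (hPQ hx) y (hPQ hy)

theorem EF.mono {A B : Gr} {k : ℕ} : ∀ {P Q : Set (A.V × B.V)}, P ⊆ Q → EF k Q → EF k P := by
  induction k with
  | zero => intro P Q hPQ h; exact PIso.mono hPQ h
  | succ k ih =>
    intro P Q hPQ h
    refine ⟨PIso.mono hPQ h.1, fun x => ?_, fun y => ?_⟩
    · obtain ⟨y, hy⟩ := h.2.1 x
      exact ⟨y, ih (Set.insert_subset_insert hPQ) hy⟩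
    · obtain ⟨x, hx⟩ := h.2.2 y
      exact ⟨x, ih (Set.insert_subset_insert hPQ) hx⟩

theorem EF.of_iso {A B : Gr} (f : A.V ≃ B.V) (hf : ∀ x y, A.r x y ↔ B.r (f x) (f y)) (k : ℕ) :
    ∀ P : Set (A.V × B.V), (∀ z ∈ P, z.2 = f z.1) → EF k P := by
  have hP : ∀ P : Set (A.V × B.V), (∀ z ∈ P, z.2 = f z.1) → PIso P := by
    intro P h x hx y hy
    rw [h x hx, h y hy]
    exact ⟨f.injective.eq_iff.symm, hf _ _⟩
  induction k with
  | zero => exact hP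
  | succ k ih =>
    intro P h
    refine ⟨hP P h, fun x => ⟨f x, ih _ ?_⟩, fun y => ⟨f.symm y, ih _ ?_⟩⟩
    · rintro z (rfl | hz)
      · rfl
      · exact h z hz
    · rintro z (rfl | hz)
      · simp
      · exact h z hz

theorem EF.symm {A B : Gr} {k : ℕ} : ∀ {P : Set (A.V × B.V)}, EF k P →
    EF (A := B) (B := A) k (Prod.swap ⁻¹' P) := by
  have hP : ∀ {P : Set (A.V × B.V)}, PIso P → PIso (A := B) (B := A) (Prod.swap ⁻¹' P) := by
    intro P h x hx y hy
    have := h _ hx _ hy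
    exact ⟨this.1.symm, this.2.symm⟩
  induction k with
  | zero => intro P h; exact hP h
  | succ k ih =>
    intro P h
    refine ⟨hP h.1, fun x => ?_, fun y => ?_⟩
    · obtain ⟨y, hy⟩ := h.2.2 x
      refine ⟨y, (ih hy).mono ?_⟩
      rintro z (rfl | hz)
      · exact Or.inl rfl
      · exact Or.inr hz
    · obtain ⟨x, hx⟩ := h.2.1 y
      refine ⟨x, (ih hx).mono ?_⟩
      rintro z (rfl | hz)
      · exact Or.inl rfl
      · exact Or.inr hz

theorem EF.trans {A B C : Gr} {k : ℕ} : ∀ {P : Set (A.V × B.V)} {Q : Set (B.V × C.V)},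
    EF k P → EF k Q →
    EF (A := A) (B := C) k {z | ∃ y, (z.1, y) ∈ P ∧ (y, z.2) ∈ Q} := by
  have hP : ∀ {P : Set (A.V × B.V)} {Q : Set (B.V × C.V)}, PIso P → PIso Q →
      PIso (A := A) (B := C) {z | ∃ y, (z.1, y) ∈ P ∧ (y, z.2) ∈ Q} := by
    rintro P Q hP hQ x ⟨y, h1, h2⟩ x' ⟨y', h1', h2'⟩
    have a := hP _ h1 _ h1'
    have b := hQ _ h2 _ h2'
    exact ⟨a.1.trans b.1, a.2.trans b.2⟩
  have hI : ∀ {P : Set (A.V × B.V)} {Q : Set (B.V × C.V)} (x : A.V) (y : B.V) (z : C.V),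
      insert (x, z) {z : A.V × C.V | ∃ y, (z.1, y) ∈ P ∧ (y, z.2) ∈ Q} ⊆
      {w | ∃ y', (w.1, y') ∈ insert (x, y) P ∧ (y', w.2) ∈ insert (y, z) Q} := by
    rintro P Q x y z w (rfl | ⟨y', h1, h2⟩)
    · exact ⟨y, Or.inl rfl, Or.inl rfl⟩
    · exact ⟨y', Or.inr h1, Or.inr h2⟩
  induction k with
  | zero => intro P Q h1 h2; exact hP h1 h2
  | succ k ih =>
    intro P Q h1 h2
    refine ⟨hP h1.1 h2.1, fun x => ?_, fun z => ?_⟩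
    · obtain ⟨y, hy⟩ := h1.2.1 x
      obtain ⟨z, hz⟩ := h2.2.1 y
      exact ⟨z, (ih hy hz).mono (hI x y z)⟩
    · obtain ⟨y, hy⟩ := h2.2.2 z
      obtain ⟨x, hx⟩ := h1.2.2 y
      exact ⟨x, (ih hx hy).mono (hI x y z)⟩

/-- Disjoint union. -/
def Gr.sum (A B : Gr) : Gr where
  V := A.V ⊕ B.V
  r
    | .inl x, .inl y => A.r x y
    | .inr x, .inr y => B.r x y
    | _, _ => False

/-- Combination of two positions. -/
def sumPos {A B A' B' : Gr} (P : Set (A.V × A'.V)) (Q : Set (B.V × B'.V)) :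
    Set ((A.sum B).V × (A'.sum B').V) :=
  {z | (∃ x ∈ P, z = (Sum.inl x.1, Sum.inl x.2)) ∨ (∃ x ∈ Q, z = (Sum.inr x.1, Sum.inr x.2))}

theorem EF.sum {A B A' B' : Gr} {k : ℕ} : ∀ {P : Set (A.V × A'.V)} {Q : Set (B.V × B'.V)},
    EF k P → EF k Q → EF (A := A.sum B) (B := A'.sum B') k (sumPos P Q) := by
  have hP : ∀ {P : Set (A.V × A'.V)} {Q : Set (B.V × B'.V)}, PIso P → PIso Q →
      PIso (A := A.sum B) (B := A'.sum B') (sumPos P Q) := by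
    rintro P Q hP hQ _ (⟨x, hx, rfl⟩ | ⟨x, hx, rfl⟩) _ (⟨y, hy, rfl⟩ | ⟨y, hy, rfl⟩)
    · have := hP x hx y hy
      exact ⟨Sum.inl_injective.eq_iff.trans (this.1.trans Sum.inl_injective.eq_iff.symm), this.2⟩
    · exact ⟨iff_of_false Sum.inl_ne_inr Sum.inl_ne_inr, Iff.rfl⟩
    · exact ⟨iff_of_false Sum.inr_ne_inl Sum.inr_ne_inl, Iff.rfl⟩
    · have := hQ x hx y hy
      exact ⟨Sum.inr_injective.eq_iff.trans (this.1.trans Sum.inr_injective.eq_iff.symm), this.2⟩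
  have hL : ∀ {P : Set (A.V × A'.V)} {Q : Set (B.V × B'.V)} x y,
      insert (Sum.inl x, Sum.inl y) (sumPos P Q) ⊆ sumPos (insert (x, y) P) Q := by
    rintro P Q x y z (rfl | ⟨w, hw, rfl⟩ | ⟨w, hw, rfl⟩)
    · exact Or.inl ⟨_, Or.inl rfl, rfl⟩
    · exact Or.inl ⟨_, Or.inr hw, rfl⟩
    · exact Or.inr ⟨_, hw, rfl⟩
  have hR : ∀ {P : Set (A.V × A'.V)} {Q : Set (B.V × B'.V)} x y,
      insert (Sum.inr x, Sum.inr y) (sumPos P Q) ⊆ sumPos P (insert (x, y) Q) := by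
    rintro P Q x y z (rfl | ⟨w, hw, rfl⟩ | ⟨w, hw, rfl⟩)
    · exact Or.inr ⟨_, Or.inl rfl, rfl⟩
    · exact Or.inl ⟨_, hw, rfl⟩
    · exact Or.inr ⟨_, Or.inr hw, rfl⟩
  induction k with
  | zero => intro P Q h1 h2; exact hP h1 h2
  | succ k ih =>
    have down : ∀ {A B : Gr} {P : Set (A.V × B.V)} {k : ℕ}, EF (k+1) P → EF k P := by
      intro A B P k
      induction k generalizing P with
      | zero => intro h; exact h.1
      | succ k ih =>
        intro h
        refine ⟨h.1, fun x => ?_, fun y => ?_⟩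
        · obtain ⟨y, hy⟩ := h.2.1 x
          exact ⟨y, ih hy⟩
        · obtain ⟨x, hx⟩ := h.2.2 y
          exact ⟨x, ih hx⟩
    intro P Q h1 h2
    refine ⟨hP h1.1 h2.1, ?_, ?_⟩
    · rintro (x | x)
      · obtain ⟨y, hy⟩ := h1.2.1 x
        exact ⟨Sum.inl y, (ih hy (down h2)).mono (hL x y)⟩
      · obtain ⟨y, hy⟩ := h2.2.1 x
        exact ⟨Sum.inr y, (ih (down h1) hy).mono (hR x y)⟩
    · rintro (y | y)
      · obtain ⟨x, hx⟩ := h1.2.2 y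
        exact ⟨Sum.inl x, (ih hx (down h2)).mono (hL x y)⟩
      · obtain ⟨x, hx⟩ := h2.2.2 y
        exact ⟨Sum.inr x, (ih (down h1) hx).mono (hR x y)⟩

/-- `I` disjoint copies of `A`. -/
def Gr.copies (I : Type) (A : Gr) : Gr where
  V := I × A.V
  r x y := x.1 = y.1 ∧ A.r x.2 y.2

theorem EF.copies {I J : Type} [Fintype I] [Fintype J] (A : Gr) (k : ℕ) :
    ∀ (R : Finset (I × J)) (P : Set ((Gr.copies I A).V × (Gr.copies J A).V)),
      (∀ x ∈ R, ∀ y ∈ R, (x.1 = y.1 ↔ x.2 = y.2)) →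
      k + R.card ≤ Fintype.card I → k + R.card ≤ Fintype.card J →
      (∀ z ∈ P, (z.1.1, z.2.1) ∈ R ∧ z.1.2 = z.2.2) → EF k P := by
  classical
  have hP : ∀ (R : Finset (I × J)) (P : Set ((Gr.copies I A).V × (Gr.copies J A).V)),
      (∀ x ∈ R, ∀ y ∈ R, (x.1 = y.1 ↔ x.2 = y.2)) →
      (∀ z ∈ P, (z.1.1, z.2.1) ∈ R ∧ z.1.2 = z.2.2) → PIso P := by
    rintro R P hR h ⟨⟨i, x⟩, ⟨j, y⟩⟩ hx ⟨⟨i', x'⟩, ⟨j', y'⟩⟩ hy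
    obtain ⟨a1, a2⟩ := h _ hx
    obtain ⟨b1, b2⟩ := h _ hy
    have c := hR _ a1 _ b1
    simp only at a2 b2 c
    subst a2 b2
    constructor
    · exact Prod.mk_inj.trans ((and_congr_left' c).trans Prod.mk_inj.symm)
    · simp only [Gr.copies, c]
  induction k with
  | zero => intro R P hR _ _ h; exact hP R P hR h
  | succ k ih =>
    intro R P hR hI hJ h
    have key : ∀ i j x, (i, j) ∈ R → EF (A := Gr.copies I A) (B := Gr.copies J A) k
        (insert ((i, x), (j, x)) P) := by
      intro i j x hij
      refine ih R _ hR (by omega) (by omega) ?_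
      rintro z (rfl | hz)
      · exact ⟨hij, rfl⟩
      · exact h z hz
    have key2 : ∀ i j x, (∀ y ∈ R, y.1 ≠ i) → (∀ y ∈ R, y.2 ≠ j) →
        EF (A := Gr.copies I A) (B := Gr.copies J A) k (insert ((i, x), (j, x)) P) := by
      intro i j x hi hj
      have hc := Finset.card_insert_le (i, j) R
      refine ih (insert (i, j) R) _ ?_ (by omega) (by omega) ?_
      · intro a ha b hb
        rcases Finset.mem_insert.1 ha with rfl | ha <;> rcases Finset.mem_insert.1 hb with rfl | hb
        · simp
        · have := hi b hb; have := hj b hb; grind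
        · have := hi a ha; have := hj a ha; grind
        · exact hR a ha b hb
      · rintro z (rfl | hz)
        · exact ⟨Finset.mem_insert_self _ _, rfl⟩
        · exact ⟨Finset.mem_insert_of_mem (h z hz).1, (h z hz).2⟩
    have exI : ∃ i, ∀ y ∈ R, y.1 ≠ i := by
      by_contra! hcon
      have : (R.image Prod.fst).card = Fintype.card I := by
        rw [← Finset.card_univ]; congr 1; ext i
        simpa using hcon i
      have := Finset.card_image_le (s := R) (f := Prod.fst)
      omega
    have exJ : ∃ i, ∀ y ∈ R, y.2 ≠ i := by
      by_contra! hcon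
      have : (R.image Prod.snd).card = Fintype.card J := by
        rw [← Finset.card_univ]; congr 1; ext i
        simpa using hcon i
      have := Finset.card_image_le (s := R) (f := Prod.snd)
      omega
    refine ⟨hP R P hR h, ?_, ?_⟩
    · rintro ⟨i, x⟩
      by_cases hi : ∃ y ∈ R, y.1 = i
      · obtain ⟨⟨i', j⟩, hy, rfl⟩ := hi
        exact ⟨(j, x), key _ _ x hy⟩
      · push Not at hi
        obtain ⟨j, hj⟩ := exJ
        exact ⟨(j, x), key2 i j x hi hj⟩
    · rintro ⟨j, x⟩
      by_cases hj : ∃ y ∈ R, y.2 = j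
      · obtain ⟨⟨i, j'⟩, hy, rfl⟩ := hj
        exact ⟨(i, x), key _ _ x hy⟩
      · push Not at hj
        obtain ⟨i, hi⟩ := exI
        exact ⟨(i, x), key2 i j x hi hj⟩

/-! ### The monoid of theories -/

/-- Indistinguishability by `k`-round games. -/
def grSetoid (k : ℕ) : Setoid Gr where
  r A B := EF (A := A) (B := B) k ∅
  iseqv :=
    { refl := fun A => EF.of_iso (Equiv.refl _) (fun _ _ => Iff.rfl) k _ (by simp)
      symm := fun h => h.symm.mono (by simp)
      trans := fun h1 h2 => (h1.trans h2).mono (by simp) }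

/-- Theories of rank `k`. -/
def Th (k : ℕ) : Type 1 := Quotient (grSetoid k)

/-- The theory of a graph. -/
def Gr.th (k : ℕ) (A : Gr) : Th k := Quotient.mk (grSetoid k) A

theorem Gr.th_eq_of_iso (k : ℕ) {A B : Gr} (f : A.V ≃ B.V)
    (hf : ∀ x y, A.r x y ↔ B.r (f x) (f y)) : A.th k = B.th k :=
  Quotient.sound (s := grSetoid k) (EF.of_iso f hf k _ (by simp))

theorem Gr.th_eq_iff (k : ℕ) {A B : Gr} : A.th k = B.th k ↔ EF (A := A) (B := B) k ∅ :=
  Quotient.eq (r := grSetoid k)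

/-- The empty graph. -/
def Gr.empty : Gr where
  V := Empty
  r _ _ := False

instance (k : ℕ) : Add (Th k) where
  add := Quotient.map₂ Gr.sum (by
    intro A A' h B B' h'
    exact (EF.sum h h').mono (by simp))

theorem Gr.th_sum (k : ℕ) (A B : Gr) : (A.sum B).th k = A.th k + B.th k := rfl

instance (k : ℕ) : AddCommMonoid (Th k) where
  zero := Gr.empty.th k
  add_assoc a b c := by
    induction a using Quotient.inductionOn with | _ a =>
    induction b using Quotient.inductionOn with | _ b =>
    induction c using Quotient.inductionOn with | _ c =>
    refine Gr.th_eq_of_iso k (A := (a.sum b).sum c) (B := a.sum (b.sum c)) (Equiv.sumAssoc _ _ _) ?_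
    rintro ((x | x) | x) ((y | y) | y) <;> exact Iff.rfl
  zero_add a := by
    induction a using Quotient.inductionOn with | _ a =>
    refine Gr.th_eq_of_iso k (A := Gr.empty.sum a) (B := a) (Equiv.emptySum Empty _) ?_
    rintro (x | x) (y | y)
    · exact x.elim
    · exact x.elim
    · exact y.elim
    · exact Iff.rfl
  add_zero a := by
    induction a using Quotient.inductionOn with | _ a =>
    refine Gr.th_eq_of_iso k (A := a.sum Gr.empty) (B := a) (Equiv.sumEmpty _ Empty) ?_
    rintro (x | x) (y | y)
    · exact Iff.rfl
    · exact y.elim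
    · exact x.elim
    · exact x.elim
  add_comm a b := by
    induction a using Quotient.inductionOn with | _ a =>
    induction b using Quotient.inductionOn with | _ b =>
    refine Gr.th_eq_of_iso k (A := a.sum b) (B := b.sum a) (Equiv.sumComm _ _) ?_
    rintro (x | x) (y | y) <;> exact Iff.rfl
  nsmul := @nsmulRec _ ⟨Gr.empty.th k⟩ _
  nsmul_zero _ := rfl
  nsmul_succ _ _ := rfl

theorem Gr.th_copies (k : ℕ) (A : Gr) (s : ℕ) : (Gr.copies (Fin s) A).th k = s • A.th k := by
  induction s with
  | zero =>
    rw [zero_nsmul]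
    refine Gr.th_eq_of_iso k (A := Gr.copies (Fin 0) A) (B := Gr.empty)
      (Equiv.equivOfIsEmpty (Fin 0 × A.V) Empty) ?_
    rintro ⟨x, _⟩
    exact x.elim0
  | succ s ih =>
    rw [succ_nsmul, ← ih, ← Gr.th_sum]
    symm
    let F : (Fin s × A.V) ⊕ A.V → Fin (s + 1) × A.V :=
      Sum.elim (fun y => (y.1.castSucc, y.2)) (fun y => (Fin.last s, y))
    have hF : Function.Bijective F := by
      constructor
      · rintro (⟨i, x⟩ | x) (⟨j, y⟩ | y) h
        · simp only [F, Sum.elim_inl, Prod.mk.injEq, Fin.castSucc_inj] at h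
          rw [h.1, h.2]
        · simp only [F, Sum.elim_inl, Sum.elim_inr, Prod.mk.injEq] at h
          exact absurd h.1 (Fin.castSucc_ne_last i)
        · simp only [F, Sum.elim_inl, Sum.elim_inr, Prod.mk.injEq] at h
          exact absurd h.1.symm (Fin.castSucc_ne_last j)
        · simp only [F, Sum.elim_inr, Prod.mk.injEq] at h
          rw [h.2]
      · rintro ⟨i, x⟩
        refine Fin.lastCases ?_ (fun i => ?_) i
        · exact ⟨Sum.inr x, rfl⟩
        · exact ⟨Sum.inl (i, x), rfl⟩
    refine Gr.th_eq_of_iso k (A := (Gr.copies (Fin s) A).sum A) (B := Gr.copies (Fin (s+1)) A)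
      (Equiv.ofBijective F hF) ?_
    rintro (⟨i, x⟩ | x) (⟨j, y⟩ | y)
    · exact and_congr_left' (Fin.castSucc_inj (a := i) (b := j)).symm
    · exact ⟨False.elim, fun h => Fin.castSucc_ne_last i h.1⟩
    · exact ⟨False.elim, fun h => Fin.castSucc_ne_last j h.1.symm⟩
    · exact (and_iff_right rfl).symm

theorem Th.absorb (k : ℕ) (a : Th k) : (k + 1) • a = k • a := by
  induction a using Quotient.inductionOn with | _ a =>
  change (k + 1) • a.th k = k • a.th k
  rw [← Gr.th_copies, ← Gr.th_copies, Gr.th_eq_iff]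
  exact EF.copies a k ∅ ∅ (by simp) (by simp) (by simp) (by simp)

theorem jtrivial_aux {M : Type*} [AddCommMonoid M] (k : ℕ) (hM : ∀ a : M, (k + 1) • a = k • a)
    (g r r' : M) (h : g = g + (r + r')) : g = g + r := by
  have h2 : ∀ N : ℕ, g = g + N • (r + r') := by
    intro N
    induction N with
    | zero => simp
    | succ N ih => rw [succ_nsmul', ← add_assoc, ← h, ← ih]
  have h3 : g = g + (k • r' + k • r) := by
    conv_lhs => rw [h2 k, nsmul_add, add_comm (k • r)]
  conv_rhs => rw [h3]
  rw [add_assoc, add_assoc, ← succ_nsmul, hM, ← h3]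

theorem jtrivial {M : Type*} [AddCommMonoid M] (k : ℕ) (hM : ∀ a : M, (k + 1) • a = k • a)
    (g g' r r' : M) (h : g = g' + r) (h' : g' = g + r') : g = g' := by
  rw [h']
  refine jtrivial_aux k hM g r' r ?_
  rw [← add_assoc, ← h', ← h]

/-! ### Finiteness of the number of theories -/

/-- Type of rank-`k` types of `l`-tuples. -/
def TpT : ℕ → ℕ → Type
  | 0, l => Set ((Fin l × Fin l) × Bool)
  | k + 1, l => Set ((Fin l × Fin l) × Bool) × Set (TpT k (l + 1))

theorem TpT.finite : ∀ k l, Finite (TpT k l)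
  | 0, l => inferInstanceAs (Finite (Set ((Fin l × Fin l) × Bool)))
  | k + 1, l => by
    have := TpT.finite k (l + 1)
    exact inferInstanceAs (Finite (Set ((Fin l × Fin l) × Bool) × Set (TpT k (l + 1))))

/-- Atomic type. -/
def atp (A : Gr) {l : ℕ} (a : Fin l → A.V) : Set ((Fin l × Fin l) × Bool) :=
  {z | if z.2 then a z.1.1 = a z.1.2 else A.r (a z.1.1) (a z.1.2)}

/-- Rank-`k` type. -/
def tp (A : Gr) : (k : ℕ) → {l : ℕ} → (Fin l → A.V) → TpT k l
  | 0, _, a => atp A a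
  | k + 1, _, a => (atp A a, Set.range fun x => tp A k (Fin.snoc a x))

theorem tp_piso {A B : Gr} {l : ℕ} {a : Fin l → A.V} {b : Fin l → B.V}
    (h : atp A a = atp B b) : PIso (Set.range fun i => (a i, b i)) := by
  rintro _ ⟨i, rfl⟩ _ ⟨j, rfl⟩
  have h1 := Set.ext_iff.1 h ((i, j), true)
  have h2 := Set.ext_iff.1 h ((i, j), false)
  simp only [atp, Set.mem_ofPred_eq, if_true] at h1
  simp only [atp, Set.mem_ofPred_eq, Bool.false_eq_true, if_false] at h2
  exact ⟨h1, h2⟩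

theorem insert_range_snoc {A B : Type} {l : ℕ} (a : Fin l → A) (b : Fin l → B) (x : A) (y : B) :
    insert (x, y) (Set.range fun i => (a i, b i)) ⊆
      Set.range fun i : Fin (l + 1) => ((Fin.snoc a x : Fin (l + 1) → A) i,
        (Fin.snoc b y : Fin (l + 1) → B) i) := by
  rintro z (rfl | ⟨i, rfl⟩)
  · exact ⟨Fin.last l, by simp⟩
  · exact ⟨i.castSucc, by simp⟩

theorem tp_EF {A B : Gr} (k : ℕ) : ∀ {l : ℕ} (a : Fin l → A.V) (b : Fin l → B.V),
    tp A k a = tp B k b → EF k (Set.range fun i => (a i, b i)) := by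
  induction k with
  | zero => intro l a b h; exact tp_piso h
  | succ k ih =>
    intro l a b h
    have h1 : atp A a = atp B b := congrArg Prod.fst h
    have h2 : (Set.range fun x => tp A k (Fin.snoc a x : Fin (l + 1) → A.V)) =
      Set.range fun x => tp B k (Fin.snoc b x : Fin (l + 1) → B.V) := congrArg Prod.snd h
    refine ⟨tp_piso h1, fun x => ?_, fun y => ?_⟩
    · have : tp A k (Fin.snoc a x : Fin (l + 1) → A.V) ∈
        Set.range fun x => tp B k (Fin.snoc b x : Fin (l + 1) → B.V) := h2 ▸ ⟨x, rfl⟩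
      obtain ⟨y, hy⟩ := this
      exact ⟨y, (ih _ _ hy.symm).mono (insert_range_snoc a b x y)⟩
    · have : tp B k (Fin.snoc b y : Fin (l + 1) → B.V) ∈
        Set.range fun x => tp A k (Fin.snoc a x : Fin (l + 1) → A.V) := h2 ▸ ⟨y, rfl⟩
      obtain ⟨x, hx⟩ := this
      exact ⟨x, (ih _ _ hx).mono (insert_range_snoc a b x y)⟩

instance (k : ℕ) : Finite (Th k) := by
  have := TpT.finite k 0
  refine Finite.of_injective
    (fun t : Th k => tp (Quotient.out (s := grSetoid k) t) k (Fin.elim0 : Fin 0 → _)) ?_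
  intro t t' h
  have := tp_EF k _ _ h
  rw [← Quotient.out_eq (s := grSetoid k) t, ← Quotient.out_eq (s := grSetoid k) t']
  exact Quotient.sound (s := grSetoid k) (this.mono (by simp))

/-! ### Games and formulas -/

/-- The first-order structure. -/
def Gr.str (A : Gr) : Language.graph.Structure A.V where
  RelMap | .adj => fun x => A.r (x 0) (x 1)

/-- Quantifier rank. -/
def qr : {n : ℕ} → Language.graph.BoundedFormula Empty n → ℕ
  | _, .falsum => 0
  | _, .equal _ _ => 0
  | _, .rel _ _ => 0
  | _, .imp f g => max (qr f) (qr g)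
  | _, .all f => qr f + 1

theorem term_var {n : ℕ} (t : Language.graph.Term (Empty ⊕ Fin n)) :
    ∃ i, t = Language.Term.var (Sum.inr i) := by
  cases t with
  | var x =>
    rcases x with x | x
    · exact x.elim
    · exact ⟨x, rfl⟩
  | func f ts => exact isEmptyElim f

theorem EF.realize {A B : Gr} {n : ℕ} (φ : Language.graph.BoundedFormula Empty n) :
    ∀ (k : ℕ) (P : Set (A.V × B.V)) (a : Fin n → A.V) (b : Fin n → B.V),
      qr φ ≤ k → EF k P → (∀ i, (a i, b i) ∈ P) → ∀ (v : Empty → A.V) (w : Empty → B.V),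
      (@Language.BoundedFormula.Realize _ _ A.str _ _ φ v a ↔
        @Language.BoundedFormula.Realize _ _ B.str _ _ φ w b) := by
  induction φ with
  | falsum => intros; exact Iff.rfl
  | equal t u =>
    intro k P a b _ h hab v w
    obtain ⟨i, rfl⟩ := term_var t
    obtain ⟨j, rfl⟩ := term_var u
    exact (h.piso _ (hab i) _ (hab j)).1
  | rel R ts =>
    intro k P a b _ h hab v w
    cases R with
    | adj =>
    obtain ⟨i, hi⟩ := term_var (ts 0)
    obtain ⟨j, hj⟩ := term_var (ts 1)
    have key := (h.piso _ (hab i) _ (hab j)).2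
    have eA : @Language.Term.realize _ _ A.str _ (Sum.elim v a) (ts 0) = a i := by rw [hi]; rfl
    have eA' : @Language.Term.realize _ _ A.str _ (Sum.elim v a) (ts 1) = a j := by rw [hj]; rfl
    have eB : @Language.Term.realize _ _ B.str _ (Sum.elim w b) (ts 0) = b i := by rw [hi]; rfl
    have eB' : @Language.Term.realize _ _ B.str _ (Sum.elim w b) (ts 1) = b j := by rw [hj]; rfl
    change A.r (@Language.Term.realize _ _ A.str _ (Sum.elim v a) (ts 0))
        (@Language.Term.realize _ _ A.str _ (Sum.elim v a) (ts 1)) ↔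
      B.r (@Language.Term.realize _ _ B.str _ (Sum.elim w b) (ts 0))
        (@Language.Term.realize _ _ B.str _ (Sum.elim w b) (ts 1))
    rw [eA, eA', eB, eB']
    exact key
  | imp f g ihf ihg =>
    intro k P a b hk h hab v w
    simp only [qr] at hk
    have h1 := ihf k P a b (by omega) h hab v w
    have h2 := ihg k P a b (by omega) h hab v w
    simp only [Language.BoundedFormula.Realize]
    rw [h1, h2]
  | all f ih =>
    intro k P a b hk h hab v w
    simp only [qr] at hk
    obtain ⟨k, rfl⟩ : ∃ k', k = k' + 1 := ⟨k - 1, by omega⟩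
    have hs : ∀ x y i, ((Fin.snoc a x : Fin _ → A.V) i, (Fin.snoc b y : Fin _ → B.V) i) ∈
        insert (x, y) P := by
      intro x y i
      refine Fin.lastCases ?_ (fun i => ?_) i
      · simp
      · simp [hab i]
    simp only [Language.BoundedFormula.Realize]
    constructor
    · intro H y
      obtain ⟨x, hx⟩ := h.2.2 y
      exact (ih k _ _ _ (by omega) hx (hs x y) v w).1 (H x)
    · intro H x
      obtain ⟨y, hy⟩ := h.2.1 x
      exact (ih k _ _ _ (by omega) hy (hs x y) v w).2 (H y)

/-- The graph of a sample. -/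
def sGr {n : ℕ} (ω : Sample n) : Gr := ⟨Fin n, sampleAdj ω⟩

theorem satL_of_th {n m : ℕ} (ω : Sample n) (ω' : Sample m) (ψ : Language.graph.Sentence)
    (h : (sGr ω).th (qr ψ) = (sGr ω').th (qr ψ)) : SatL ω ψ ↔ SatL ω' ψ := by
  have h := (Gr.th_eq_iff _).1 h
  have e : ∀ {n : ℕ} (ω : Sample n), graphStructure ω = (sGr ω).str := by
    intro n ω
    ext
    · rename_i f _; exact isEmptyElim f
    · rename_i R _; cases R; rfl
  unfold SatL
  rw [e, e]
  exact EF.realize ψ (qr ψ) ∅ _ _ le_rfl h (fun i => i.elim0) _ _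

/-! ### Product measures and the second moment method -/

section product
variable {E : Type} [Fintype E] [DecidableEq E]

open scoped Classical in
theorem cyl_sum (f : E → Bool → ℝ) (hf : ∀ e, f e true + f e false = 1) (S : Finset E)
    (η : E → Bool) :
    (∑ ω : E → Bool, if ∀ e ∈ S, ω e = η e then ∏ e, f e (ω e) else 0) = ∏ e ∈ S, f e (η e) := by
  have h1 : ∀ ω : E → Bool, (if ∀ e ∈ S, ω e = η e then ∏ e, f e (ω e) else 0) =
      ∏ e, (if e ∈ S ∧ ω e ≠ η e then 0 else f e (ω e)) := by
    intro ω
    split_ifs with h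
    · refine Finset.prod_congr rfl fun e _ => ?_
      rw [if_neg]
      rintro ⟨h1, h2⟩
      exact h2 (h e h1)
    · push Not at h
      obtain ⟨e, he, hne⟩ := h
      symm
      exact Finset.prod_eq_zero (Finset.mem_univ e) (if_pos ⟨he, hne⟩)
  simp_rw [h1]
  have h2 := Finset.prod_univ_sum (fun _ : E => (Finset.univ : Finset Bool))
    (fun e b => if e ∈ S ∧ b ≠ η e then 0 else f e b)
  rw [Fintype.piFinset_univ] at h2
  rw [← h2, ← Finset.prod_subset (Finset.subset_univ S)]
  · refine Finset.prod_congr rfl fun e he => ?_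
    rw [Fintype.sum_bool]
    cases h : η e <;> simp [he]
  · intro e _ he
    rw [Fintype.sum_bool]
    simp [he, hf e]

open scoped Classical in
theorem second_moment {ι : Type} [DecidableEq ι] (f : E → Bool → ℝ) (hf : ∀ e, f e true + f e false = 1)
    (hf0 : ∀ e b, 0 ≤ f e b) (J : Finset ι) (S : ι → Finset E) (η : E → Bool) (l : E → ℝ)
    (hl0 : ∀ e, 0 ≤ l e) (hl : ∀ e, Real.exp (- l e) ≤ f e false)
    (hη : ∀ i ∈ J, ∀ j ∈ J, i ≠ j → ∀ e ∈ S i ∩ S j, η e = false)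
    (D μ : ℝ) (hD : ∀ i ∈ J, ∑ j ∈ J.erase i, ∑ e ∈ S i ∩ S j, l e ≤ D)
    (hμ : 0 < μ) (hμ' : μ ≤ ∑ i ∈ J, ∏ e ∈ S i, f e (η e)) (hD0 : 0 ≤ D) :
    (∑ ω : E → Bool, if ∃ i ∈ J, ∀ e ∈ S i, ω e = η e then 0 else ∏ e, f e (ω e))
      ≤ (1 + D) / μ := by
  set W : (E → Bool) → ℝ := fun ω => ∏ e, f e (ω e) with hW
  have hW0 : ∀ ω, 0 ≤ W ω := fun ω => Finset.prod_nonneg fun e _ => hf0 _ _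
  set Q : ι → ℝ := fun i => ∏ e ∈ S i, f e (η e) with hQ
  set ν : ℝ := ∑ i ∈ J, Q i with hν
  have hf1 : ∀ e b, f e b ≤ 1 := by
    intro e b
    have := hf e; have := hf0 e true; have := hf0 e false
    cases b <;> linarith
  have hQ0 : ∀ i, 0 ≤ Q i := fun i => Finset.prod_nonneg fun e _ => hf0 _ _
  let ind : ι → (E → Bool) → ℝ := fun i ω => if ∀ e ∈ S i, ω e = η e then 1 else 0
  have hW1 : ∑ ω, W ω = 1 := by
    have := cyl_sum f hf ∅ η
    simpa using this
  have e1 : ∀ i, ∑ ω, W ω * ind i ω = Q i := by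
    intro i
    rw [hQ]; dsimp only
    rw [← cyl_sum f hf (S i) η]
    refine Finset.sum_congr rfl fun ω _ => ?_
    simp only [ind, mul_ite, mul_one, mul_zero]
    rfl
  have e2 : ∀ i j, ∑ ω, W ω * (ind i ω * ind j ω) = ∏ e ∈ S i ∪ S j, f e (η e) := by
    intro i j
    rw [← cyl_sum f hf (S i ∪ S j) η]
    refine Finset.sum_congr rfl fun ω _ => ?_
    have : (∀ e ∈ S i ∪ S j, ω e = η e) ↔ (∀ e ∈ S i, ω e = η e) ∧ (∀ e ∈ S j, ω e = η e) := by
      simp only [Finset.mem_union, or_imp, forall_and]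
    rw [if_congr this rfl rfl]
    by_cases h1 : ∀ e ∈ S i, ω e = η e
    · by_cases h2 : ∀ e ∈ S j, ω e = η e
      · simp only [ind]
        rw [if_pos h1, if_pos h2, if_pos ⟨h1, h2⟩]; simp [hW]
      · simp only [ind]
        have h3 : ¬ ((∀ e ∈ S i, ω e = η e) ∧ (∀ e ∈ S j, ω e = η e)) := fun h => h2 h.2
        rw [if_neg h2, if_neg h3]; simp
    · simp only [ind]
      have h3 : ¬ ((∀ e ∈ S i, ω e = η e) ∧ (∀ e ∈ S j, ω e = η e)) := fun h => h1 h.1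
      rw [if_neg h1, if_neg h3]; simp
  have e3 : ∀ i j, ∏ e ∈ S i ∪ S j, f e (η e) ≤ Q i := by
    intro i j
    rw [← Finset.prod_sdiff (Finset.subset_union_left (s₁ := S i) (s₂ := S j))]
    exact mul_le_of_le_one_left (hQ0 i)
      (Finset.prod_le_one (fun e _ => hf0 _ _) (fun e _ => hf1 _ _))
  have e4 : ∀ i ∈ J, ∀ j ∈ J, i ≠ j →
      ∏ e ∈ S i ∪ S j, f e (η e) ≤ Q i * Q j + Q i * ∑ e ∈ S i ∩ S j, l e := by
    intro i hi j hj hij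
    have h1 := Finset.prod_union_inter (s₁ := S i) (s₂ := S j) (f := fun e => f e (η e))
    set P := ∏ e ∈ S i ∪ S j, f e (η e) with hP
    set s := ∑ e ∈ S i ∩ S j, l e with hs
    have hs0 : 0 ≤ s := Finset.sum_nonneg fun e _ => hl0 e
    have h2 : 1 - s ≤ ∏ e ∈ S i ∩ S j, f e (η e) := by
      calc 1 - s ≤ Real.exp (-s) := by have := Real.add_one_le_exp (-s); linarith
        _ = ∏ e ∈ S i ∩ S j, Real.exp (- l e) := by
          rw [← Real.exp_sum, Finset.sum_neg_distrib]
        _ ≤ _ := by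
          refine Finset.prod_le_prod (fun e _ => (Real.exp_pos _).le) fun e he => ?_
          rw [hη i hi j hj hij e he]
          exact hl e
    have hP0 : 0 ≤ P := Finset.prod_nonneg fun e _ => hf0 _ _
    have h3 := mul_le_mul_of_nonneg_left h2 hP0
    have h4 := mul_le_mul_of_nonneg_right (e3 i j) hs0
    rw [h1] at h3
    simp only [hQ] at h4 ⊢
    linarith
  let X : (E → Bool) → ℝ := fun ω => ∑ i ∈ J, ind i ω
  have m1 : ∑ ω, W ω * X ω = ν := by
    simp only [X, Finset.mul_sum]
    rw [Finset.sum_comm]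
    exact Finset.sum_congr rfl fun i _ => e1 i
  have m2 : ∑ ω, W ω * (X ω * X ω) ≤ ν * ν + ν * (1 + D) := by
    have : ∑ ω, W ω * (X ω * X ω) = ∑ i ∈ J, ∑ j ∈ J, ∏ e ∈ S i ∪ S j, f e (η e) := by
      simp only [X, Finset.sum_mul_sum]
      simp_rw [Finset.mul_sum]
      rw [Finset.sum_comm]
      refine Finset.sum_congr rfl fun i _ => ?_
      rw [Finset.sum_comm]
      exact Finset.sum_congr rfl fun j _ => e2 i j
    rw [this]
    calc ∑ i ∈ J, ∑ j ∈ J, ∏ e ∈ S i ∪ S j, f e (η e)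
        ≤ ∑ i ∈ J, (Q i * ν + Q i * (1 + D)) := by
          refine Finset.sum_le_sum fun i hi => ?_
          rw [← Finset.add_sum_erase J _ hi]
          have a1 : ∏ e ∈ S i ∪ S i, f e (η e) ≤ Q i := e3 i i
          have a2 : ∑ j ∈ J.erase i, ∏ e ∈ S i ∪ S j, f e (η e) ≤
              ∑ j ∈ J.erase i, (Q i * Q j + Q i * ∑ e ∈ S i ∩ S j, l e) :=
            Finset.sum_le_sum fun j hj => e4 i hi j (Finset.mem_of_mem_erase hj)
              (Finset.ne_of_mem_erase hj).symm
          rw [Finset.sum_add_distrib, ← Finset.mul_sum, ← Finset.mul_sum] at a2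
          have a3 : ∑ j ∈ J.erase i, Q j ≤ ν :=
            Finset.sum_le_sum_of_subset_of_nonneg (Finset.erase_subset _ _) fun j _ _ => hQ0 j
          have a4 := mul_le_mul_of_nonneg_left a3 (hQ0 i)
          have a5 := mul_le_mul_of_nonneg_left (hD i hi) (hQ0 i)
          linarith
      _ = ν * ν + ν * (1 + D) := by
          rw [Finset.sum_add_distrib, ← Finset.sum_mul, ← Finset.sum_mul]
  have hν0 : 0 < ν := lt_of_lt_of_le hμ hμ'
  have m3 : (∑ ω, if ∃ i ∈ J, ∀ e ∈ S i, ω e = η e then 0 else W ω) * (ν * ν) ≤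
      ∑ ω, W ω * ((X ω - ν) * (X ω - ν)) := by
    rw [Finset.sum_mul]
    refine Finset.sum_le_sum fun ω _ => ?_
    split_ifs with h
    · rw [zero_mul]; exact mul_nonneg (hW0 ω) (mul_self_nonneg _)
    · have : X ω = 0 := by
        refine Finset.sum_eq_zero fun i hi => ?_
        simp only [ind]
        rw [if_neg]
        intro h'
        exact h ⟨i, hi, h'⟩
      rw [this]
      apply le_of_eq; ring
  have m4 : ∀ c : ℝ, ∑ ω, W ω * ((X ω - c) * (X ω - c)) =
      ∑ ω, W ω * (X ω * X ω) - 2 * c * ∑ ω, W ω * X ω + c * c * ∑ ω, W ω := by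
    intro c
    rw [Finset.mul_sum, Finset.mul_sum, ← Finset.sum_sub_distrib, ← Finset.sum_add_distrib]
    refine Finset.sum_congr rfl fun ω _ => by ring
  rw [m4, m1, hW1] at m3
  set Z := ∑ ω, if ∃ i ∈ J, ∀ e ∈ S i, ω e = η e then 0 else W ω with hZ
  have m5 : Z * ν ≤ 1 + D := by
    have : ν * (Z * ν) ≤ ν * (1 + D) := by nlinarith
    exact le_of_mul_le_mul_left this hν0
  have hZ0 : 0 ≤ Z := Finset.sum_nonneg fun ω _ => by
    split_ifs
    · exact le_rfl
    · exact hW0 ω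
  rw [le_div_iff₀ hμ]
  exact (mul_le_mul_of_nonneg_left hμ' hZ0).trans m5

end product

/-! ### Isolated copies of a fixed graph -/

theorem adjVal_comm {n : ℕ} (ω : Sample n) (a b : ℕ) : adjVal ω a b ↔ adjVal ω b a := by
  unfold adjVal
  simp only [or_comm]

theorem adjVal_irrefl {n : ℕ} (ω : Sample n) (a : ℕ) : ¬ adjVal ω a a := by
  rintro ⟨⟨⟨x, y⟩, h⟩, _, h1⟩
  simp only [Fin.lt_def] at h h1
  omega

theorem adjVal_edge {n : ℕ} (ω : Sample n) (e : EdgeIdx n) :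
    adjVal ω e.1.1.val e.1.2.val ↔ ω e = true := by
  constructor
  · rintro ⟨⟨⟨x, y⟩, h⟩, h0, h1⟩
    obtain ⟨⟨x', y'⟩, h'⟩ := e
    simp only [Fin.lt_def] at h h' h1
    have hx : x = x' := by ext; omega
    have hy : y = y' := by ext; omega
    subst hx hy
    exact h0
  · intro h
    exact ⟨e, h, Or.inl ⟨rfl, rfl⟩⟩

open scoped Classical in
/-- The pattern: copies of `ω₀` on all blocks, no edges between blocks. -/
noncomputable def pat {n₀ : ℕ} (ω₀ : Sample n₀) (m : ℕ) (e : EdgeIdx m) : Bool :=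
  decide (e.1.1.val / n₀ = e.1.2.val / n₀ ∧ adjVal ω₀ (e.1.1.val % n₀) (e.1.2.val % n₀))

/-- Pairs touching block `j`. -/
def blk (n₀ m j : ℕ) : Finset (EdgeIdx m) :=
  Finset.univ.filter fun e => e.1.1.val / n₀ = j ∨ e.1.2.val / n₀ = j

theorem adj_of_pat {n₀ m j : ℕ} (ω₀ : Sample n₀) (ω : Sample m)
    (h : ∀ e ∈ blk n₀ m j, ω e = pat ω₀ m e) (v w : Fin m)
    (hvw : v.val / n₀ = j ∨ w.val / n₀ = j) :
    sampleAdj ω v w ↔ v.val / n₀ = w.val / n₀ ∧ adjVal ω₀ (v.val % n₀) (w.val % n₀) := by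
  have key : ∀ v w : Fin m, v < w → (v.val / n₀ = j ∨ w.val / n₀ = j) →
      (sampleAdj ω v w ↔ v.val / n₀ = w.val / n₀ ∧ adjVal ω₀ (v.val % n₀) (w.val % n₀)) := by
    intro v w hlt hj
    have h1 := adjVal_edge ω ⟨(v, w), hlt⟩
    have h2 := h ⟨(v, w), hlt⟩ (by simpa [blk] using hj)
    unfold sampleAdj
    simp only at h1
    rw [h1, h2]
    simp [pat]
  rcases lt_trichotomy v w with hlt | rfl | hlt
  · exact key v w hlt hvw
  · unfold sampleAdj
    simp [adjVal_irrefl]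
  · have := key w v hlt hvw.symm
    unfold sampleAdj at this ⊢
    rw [adjVal_comm ω, this, adjVal_comm ω₀]
    exact and_congr_left' eq_comm

theorem th_of_pat {n₀ m j : ℕ} (k : ℕ) (hn₀ : 0 < n₀) (hj : j < m / n₀) (ω₀ : Sample n₀)
    (ω : Sample m) (h : ∀ e ∈ blk n₀ m j, ω e = pat ω₀ m e) :
    ∃ r, (sGr ω).th k = (sGr ω₀).th k + r := by
  let B : Gr := ⟨{v : Fin m // v.val / n₀ ≠ j}, fun x y => sampleAdj ω x.1 y.1⟩
  refine ⟨B.th k, ?_⟩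
  rw [← Gr.th_sum]
  symm
  have hm : (j + 1) * n₀ ≤ m :=
    (Nat.mul_le_mul_right _ hj).trans (Nat.div_mul_le_self m n₀)
  have hlt : ∀ a : Fin n₀, n₀ * j + a.val < m := by
    intro a
    have := a.2
    nlinarith
  have hdiv : ∀ a : Fin n₀, (n₀ * j + a.val) / n₀ = j := by
    intro a
    rw [Nat.mul_add_div hn₀, Nat.div_eq_of_lt a.2, add_zero]
  have hmod : ∀ a : Fin n₀, (n₀ * j + a.val) % n₀ = a.val := by
    intro a
    rw [Nat.mul_add_mod, Nat.mod_eq_of_lt a.2]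
  let F : Fin n₀ ⊕ {v : Fin m // v.val / n₀ ≠ j} → Fin m :=
    Sum.elim (fun a => ⟨n₀ * j + a.val, hlt a⟩) Subtype.val
  have hF : Function.Bijective F := by
    constructor
    · rintro (a | v) (b | w) hab
      · simp only [F, Sum.elim_inl, Fin.mk.injEq] at hab
        congr 1; ext; omega
      · simp only [F, Sum.elim_inl, Sum.elim_inr] at hab
        have := w.2
        rw [← hab] at this
        exact absurd (hdiv a) this
      · simp only [F, Sum.elim_inl, Sum.elim_inr] at hab
        have := v.2
        rw [hab] at this
        exact absurd (hdiv b) this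
      · simp only [F, Sum.elim_inr] at hab
        rw [Subtype.ext hab]
    · intro v
      by_cases hv : v.val / n₀ = j
      · refine ⟨Sum.inl ⟨v.val % n₀, Nat.mod_lt _ hn₀⟩, ?_⟩
        simp only [F, Sum.elim_inl]
        ext
        simp only
        rw [← hv, Nat.div_add_mod]
      · exact ⟨Sum.inr ⟨v, hv⟩, rfl⟩
  refine Gr.th_eq_of_iso k (A := (sGr ω₀).sum B) (B := sGr ω) (Equiv.ofBijective F hF) ?_
  rintro (a | v) (b | w)
  · change adjVal ω₀ a.val b.val ↔ sampleAdj ω ⟨n₀ * j + a.val, hlt a⟩ ⟨n₀ * j + b.val, hlt b⟩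
    rw [adj_of_pat ω₀ ω h _ _ (Or.inl (hdiv a))]
    have a1 := hdiv a
    have a2 := hmod a
    have b1 := hdiv b
    have b2 := hmod b
    simp only
    rw [a1, a2, b1, b2]
    simp only [true_and]
  · change False ↔ sampleAdj ω ⟨n₀ * j + a.val, hlt a⟩ w.1
    rw [adj_of_pat ω₀ ω h _ _ (Or.inl (hdiv a))]
    exact ⟨False.elim, fun h => w.2 (h.1.symm.trans (hdiv a))⟩
  · change False ↔ sampleAdj ω v.1 ⟨n₀ * j + b.val, hlt b⟩
    rw [adj_of_pat ω₀ ω h _ _ (Or.inr (hdiv b))]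
    exact ⟨False.elim, fun h => v.2 (h.1.trans (hdiv b))⟩
  · exact Iff.rfl

/-- Edge weight. -/
noncomputable def ew (p : ℕ → ℝ) {m : ℕ} (e : EdgeIdx m) (b : Bool) : ℝ :=
  if b then p (e.1.2.val - e.1.1.val) else 1 - p (e.1.2.val - e.1.1.val)

theorem sampleWeight_eq (p : ℕ → ℝ) {m : ℕ} (ω : Sample m) :
    sampleWeight p ω = ∏ e, ew p e (ω e) := rfl

/-- Negative logarithms of the non-edge probabilities. -/
noncomputable def nl (p : ℕ → ℝ) (i : ℕ) : ℝ := - Real.log (1 - p i)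

theorem nl_nonneg (p : ℕ → ℝ) (hp : ∀ i, 0 ≤ p i ∧ p i < 1) (i : ℕ) : 0 ≤ nl p i := by
  have := hp i
  have := Real.log_nonpos (x := 1 - p i) (by linarith) (by linarith)
  unfold nl; linarith

theorem exp_nl (p : ℕ → ℝ) (hp : ∀ i, 0 ≤ p i ∧ p i < 1) (i : ℕ) :
    Real.exp (- nl p i) = 1 - p i := by
  have := hp i
  unfold nl
  rw [neg_neg, Real.exp_log (by linarith)]

/-- Total negative logarithm. -/
noncomputable def NL (p : ℕ → ℝ) (m : ℕ) : ℝ := ∑ i ∈ Finset.Icc 1 m, nl p i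

theorem blk_sum_aux (g : ℕ → ℝ) (hg : ∀ i, 0 ≤ g i) (n₀ m j : ℕ) (hn₀ : 0 < n₀)
    (π : EdgeIdx m → Fin m)
    (hπ : ∀ e e', π e = π e' → e.1.2.val - e.1.1.val = e'.1.2.val - e'.1.1.val → e = e') :
    ∑ e ∈ Finset.univ.filter (fun e : EdgeIdx m => (π e).val / n₀ = j),
      g (e.1.2.val - e.1.1.val) ≤ n₀ * ∑ i ∈ Finset.Icc 1 m, g i := by
  classical
  set T : Finset (Fin m) := Finset.univ.filter fun v => v.val / n₀ = j with hT
  have hc : T.card ≤ n₀ := by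
    have : T.card ≤ (Finset.range n₀).card := by
      refine Finset.card_le_card_of_injOn (fun v => v.val % n₀) ?_ ?_
      · intro v _
        simpa using Nat.mod_lt _ hn₀
      · intro v hv w hw hvw
        simp only [hT, Finset.coe_filter, Finset.mem_univ, true_and, Set.mem_ofPred_eq] at hv hw
        simp only at hvw
        ext
        rw [← Nat.div_add_mod v.val n₀, ← Nat.div_add_mod w.val n₀, hv, hw, hvw]
    simpa using this
  rw [← Finset.sum_fiberwise_of_maps_to (t := T) (g := π) (by
    intro e he
    simpa [hT] using he)]
  have hs0 : 0 ≤ ∑ i ∈ Finset.Icc 1 m, g i := Finset.sum_nonneg fun i _ => hg i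
  calc _ ≤ ∑ v ∈ T, ∑ i ∈ Finset.Icc 1 m, g i := by
        refine Finset.sum_le_sum fun v _ => ?_
        rw [← Finset.sum_image (s := Finset.filter (fun e => π e = v)
          (Finset.univ.filter (fun e : EdgeIdx m => (π e).val / n₀ = j)))
          (g := fun e => e.1.2.val - e.1.1.val) (f := g)]
        · refine Finset.sum_le_sum_of_subset_of_nonneg ?_ fun i _ _ => hg i
          intro i hi
          obtain ⟨e, _, rfl⟩ := Finset.mem_image.1 hi
          have h1 := e.2
          have h2 := e.1.2.2
          rw [Fin.lt_def] at h1
          rw [Finset.mem_Icc]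
          omega
        · intro e he e' he' h
          simp only [Finset.coe_filter, Finset.mem_filter, Set.mem_ofPred_eq] at he he'
          exact hπ e e' (he.2.trans he'.2.symm) h
    _ = T.card * ∑ i ∈ Finset.Icc 1 m, g i := by rw [Finset.sum_const, nsmul_eq_mul]
    _ ≤ _ := mul_le_mul_of_nonneg_right (by exact_mod_cast hc) hs0

theorem blk_sum (g : ℕ → ℝ) (hg : ∀ i, 0 ≤ g i) (n₀ m j : ℕ) (hn₀ : 0 < n₀) :
    ∑ e ∈ blk n₀ m j, g (e.1.2.val - e.1.1.val) ≤ 2 * n₀ * ∑ i ∈ Finset.Icc 1 m, g i := by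
  classical
  have h1 := blk_sum_aux g hg n₀ m j hn₀ (fun e => e.1.1) (by
    rintro ⟨⟨x, y⟩, h⟩ ⟨⟨x', y'⟩, h'⟩ hx hy
    simp only [Fin.lt_def] at h h' hx hy
    subst hx
    have : y = y' := by ext; omega
    subst this; rfl)
  have h2 := blk_sum_aux g hg n₀ m j hn₀ (fun e => e.1.2) (by
    rintro ⟨⟨x, y⟩, h⟩ ⟨⟨x', y'⟩, h'⟩ hx hy
    simp only [Fin.lt_def] at h h' hx hy
    subst hx
    have : x = x' := by ext; omega
    subst this; rfl)
  have h3 : ∑ e ∈ blk n₀ m j, g (e.1.2.val - e.1.1.val) ≤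
      ∑ e ∈ Finset.univ.filter (fun e : EdgeIdx m => e.1.1.val / n₀ = j),
        g (e.1.2.val - e.1.1.val) +
      ∑ e ∈ Finset.univ.filter (fun e : EdgeIdx m => e.1.2.val / n₀ = j),
        g (e.1.2.val - e.1.1.val) := by
    rw [← Finset.sum_union_inter, ← Finset.filter_or]
    have : 0 ≤ ∑ e ∈ (Finset.univ.filter (fun e : EdgeIdx m => e.1.1.val / n₀ = j)) ∩
      (Finset.univ.filter (fun e : EdgeIdx m => e.1.2.val / n₀ = j)),
        g (e.1.2.val - e.1.1.val) := Finset.sum_nonneg fun e _ => hg _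
    unfold blk
    linarith
  linarith

theorem blk_prod (p : ℕ → ℝ) (hp : ∀ i, 0 ≤ p i ∧ p i < 1) {n₀ : ℕ} (hn₀ : 0 < n₀)
    (ω₀ : Sample n₀) (m j : ℕ) (hj : j < m / n₀) :
    sampleWeight p ω₀ * Real.exp (- (2 * n₀ * NL p m)) ≤
      ∏ e ∈ blk n₀ m j, ew p e (pat ω₀ m e) := by
  classical
  have hm : (j + 1) * n₀ ≤ m :=
    (Nat.mul_le_mul_right _ hj).trans (Nat.div_mul_le_self m n₀)
  have hlt : ∀ a : Fin n₀, n₀ * j + a.val < m := by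
    intro a
    have := a.2
    nlinarith
  have hdiv : ∀ a : Fin n₀, (n₀ * j + a.val) / n₀ = j := by
    intro a
    rw [Nat.mul_add_div hn₀, Nat.div_eq_of_lt a.2, add_zero]
  have hmod : ∀ a : Fin n₀, (n₀ * j + a.val) % n₀ = a.val := by
    intro a
    rw [Nat.mul_add_mod, Nat.mod_eq_of_lt a.2]
  rw [← Finset.prod_filter_mul_prod_filter_not (blk n₀ m j)
    (fun e => e.1.1.val / n₀ = e.1.2.val / n₀)]
  have hw0 : 0 ≤ sampleWeight p ω₀ := by
    refine Finset.prod_nonneg fun e _ => ?_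
    have := hp (e.1.2.val - e.1.1.val)
    split_ifs <;> linarith
  have h1 : sampleWeight p ω₀ = ∏ e ∈ (blk n₀ m j).filter
      (fun e => e.1.1.val / n₀ = e.1.2.val / n₀), ew p e (pat ω₀ m e) := by
    rw [sampleWeight_eq]
    refine Finset.prod_bij (fun e _ => ⟨(⟨n₀ * j + e.1.1.val, hlt _⟩, ⟨n₀ * j + e.1.2.val, hlt _⟩),
      by have := e.2; simp only [Fin.lt_def] at this ⊢; omega⟩) ?_ ?_ ?_ ?_
    · intro e _
      simp [blk, hdiv]
    · rintro ⟨⟨x, y⟩, h⟩ _ ⟨⟨x', y'⟩, h'⟩ _ heq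
      simp only [Subtype.mk.injEq, Prod.mk.injEq, Fin.mk.injEq] at heq
      have hx : x = x' := by ext; omega
      have hy : y = y' := by ext; omega
      subst hx hy; rfl
    · rintro ⟨⟨x, y⟩, h⟩ he
      simp only [blk, Finset.mem_filter, Finset.mem_univ, true_and] at he
      have hx : x.val / n₀ = j := by omega
      have hy : y.val / n₀ = j := by omega
      have hx' := Nat.div_add_mod x.val n₀
      have hy' := Nat.div_add_mod y.val n₀
      rw [hx] at hx'
      rw [hy] at hy'
      simp only [Fin.lt_def] at h
      refine ⟨⟨(⟨x.val % n₀, Nat.mod_lt _ hn₀⟩, ⟨y.val % n₀, Nat.mod_lt _ hn₀⟩), ?_⟩,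
        Finset.mem_univ _, ?_⟩
      · simp only [Fin.lt_def]; omega
      · simp only [hx', hy']
    · intro e _
      have hp : pat ω₀ m ⟨(⟨n₀ * j + e.1.1.val, hlt _⟩, ⟨n₀ * j + e.1.2.val, hlt _⟩),
          by have := e.2; simp only [Fin.lt_def] at this ⊢; omega⟩ = ω₀ e := by
        rw [Bool.eq_iff_iff]
        simp only [pat, hdiv, hmod, true_and, decide_eq_true_eq]
        exact adjVal_edge ω₀ e
      rw [hp]
      unfold ew
      simp only [Nat.add_sub_add_left]
  rw [← h1]
  refine mul_le_mul_of_nonneg_left ?_ hw0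
  calc Real.exp (- (2 * n₀ * NL p m))
      ≤ Real.exp (- ∑ e ∈ blk n₀ m j, nl p (e.1.2.val - e.1.1.val)) := by
        rw [Real.exp_le_exp, neg_le_neg_iff]
        exact blk_sum (nl p) (nl_nonneg p hp) n₀ m j hn₀
    _ ≤ Real.exp (- ∑ e ∈ (blk n₀ m j).filter
          (fun e => ¬ e.1.1.val / n₀ = e.1.2.val / n₀), nl p (e.1.2.val - e.1.1.val)) := by
        rw [Real.exp_le_exp, neg_le_neg_iff]
        exact Finset.sum_le_sum_of_subset_of_nonneg (Finset.filter_subset _ _)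
          fun e _ _ => nl_nonneg p hp _
    _ = ∏ e ∈ (blk n₀ m j).filter (fun e => ¬ e.1.1.val / n₀ = e.1.2.val / n₀),
          ew p e (pat ω₀ m e) := by
        rw [← Finset.sum_neg_distrib, Real.exp_sum]
        refine Finset.prod_congr rfl fun e he => ?_
        rw [exp_nl p hp]
        have : pat ω₀ m e = false := by
          simp only [pat, decide_eq_false_iff_not]
          exact fun h => (Finset.mem_filter.1 he).2 h.1
        rw [this]
        simp [ew]

theorem ew_nonneg (p : ℕ → ℝ) (hp : ∀ i, 0 ≤ p i ∧ p i < 1) {m : ℕ} (e : EdgeIdx m) (b : Bool) :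
    0 ≤ ew p e b := by
  have := hp (e.1.2.val - e.1.1.val)
  unfold ew
  split_ifs <;> linarith

theorem NL_nonneg (p : ℕ → ℝ) (hp : ∀ i, 0 ≤ p i ∧ p i < 1) (m : ℕ) : 0 ≤ NL p m :=
  Finset.sum_nonneg fun i _ => nl_nonneg p hp i

theorem Pr_no_copy (p : ℕ → ℝ) (hp : ∀ i, 0 ≤ p i ∧ p i < 1) {n₀ : ℕ} (hn₀ : 0 < n₀)
    (ω₀ : Sample n₀) (hw : sampleWeight p ω₀ ≠ 0) (k m : ℕ) (hm : n₀ ≤ m) :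
    Pr p m (fun ω => ¬ ∃ r, (sGr ω).th k = (sGr ω₀).th k + r) ≤
      (1 + 2 * n₀ * NL p m) /
        ((m / n₀ : ℕ) * (sampleWeight p ω₀ * Real.exp (- (2 * n₀ * NL p m)))) := by
  classical
  have hw0 : 0 < sampleWeight p ω₀ :=
    lt_of_le_of_ne (Finset.prod_nonneg fun e _ => ew_nonneg p hp e (ω₀ e)) hw.symm
  have hJ : 0 < m / n₀ := Nat.div_pos hm hn₀
  have hJ' : (0 : ℝ) < ((m / n₀ : ℕ) : ℝ) := by exact_mod_cast hJ
  have hNL := NL_nonneg p hp m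
  have key := second_moment (E := EdgeIdx m) (fun e b => ew p e b) (by intro e; simp [ew])
    (fun e b => ew_nonneg p hp e b) (Finset.range (m / n₀)) (blk n₀ m) (pat ω₀ m)
    (fun e => nl p (e.1.2.val - e.1.1.val)) (fun e => nl_nonneg p hp _)
    (by intro e; rw [exp_nl p hp]; simp [ew])
    (by
      intro i _ j _ hij e he
      simp only [blk, Finset.mem_inter, Finset.mem_filter, Finset.mem_univ, true_and] at he
      simp only [pat, decide_eq_false_iff_not]
      rintro ⟨h, _⟩
      omega)
    (2 * n₀ * NL p m) ((m / n₀ : ℕ) * (sampleWeight p ω₀ * Real.exp (- (2 * n₀ * NL p m))))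
    (by
      intro i _
      rw [← Finset.sum_biUnion]
      · refine le_trans ?_ (blk_sum (nl p) (nl_nonneg p hp) n₀ m i hn₀)
        refine Finset.sum_le_sum_of_subset_of_nonneg ?_ fun e _ _ => nl_nonneg p hp _
        intro e he
        obtain ⟨j, _, hj⟩ := Finset.mem_biUnion.1 he
        exact (Finset.mem_inter.1 hj).1
      · intro j1 h1 j2 h2 h12
        rw [Function.onFun, Finset.disjoint_left]
        intro e he1 he2
        simp only [blk, Finset.mem_inter, Finset.mem_filter, Finset.mem_univ, true_and] at he1 he2
        have n1 := Finset.ne_of_mem_erase h1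
        have n2 := Finset.ne_of_mem_erase h2
        omega)
    (by positivity)
    (by
      have := Finset.card_nsmul_le_sum (Finset.range (m / n₀))
        (fun i => ∏ e ∈ blk n₀ m i, ew p e (pat ω₀ m e))
        (sampleWeight p ω₀ * Real.exp (- (2 * n₀ * NL p m)))
        (fun j hj => blk_prod p hp hn₀ ω₀ m j (Finset.mem_range.1 hj))
      rwa [Finset.card_range, nsmul_eq_mul] at this)
    (by positivity)
  refine le_trans ?_ key
  unfold Pr
  refine Finset.sum_le_sum fun ω _ => ?_
  have hW : 0 ≤ sampleWeight p ω := Finset.prod_nonneg fun e _ => ew_nonneg p hp e (ω e)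
  by_cases h : ∃ i ∈ Finset.range (m / n₀), ∀ e ∈ blk n₀ m i, ω e = pat ω₀ m e
  · rw [if_pos h]
    obtain ⟨j, hj, h⟩ := h
    have := th_of_pat k hn₀ (Finset.mem_range.1 hj) ω₀ ω h
    rw [if_neg (not_not.2 this)]
  · rw [if_neg h]
    split_ifs
    · exact le_of_eq (sampleWeight_eq p ω)
    · exact hW

theorem Pr_nonneg (p : ℕ → ℝ) (hp : ∀ i, 0 ≤ p i ∧ p i < 1) (m : ℕ) (P : Sample m → Prop) :
    0 ≤ Pr p m P := by
  refine Finset.sum_nonneg fun ω _ => ?_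
  split_ifs
  · exact Finset.prod_nonneg fun e _ => ew_nonneg p hp e (ω e)
  · exact le_rfl

theorem tendsto_no_copy (p : ℕ → ℝ) (hp : ∀ i, 0 ≤ p i ∧ p i < 1)
    (hlog : Tendsto
      (fun n : ℕ => Real.log (∏ i ∈ Finset.Icc 1 n, (1 - p i)) / Real.log n) atTop (nhds 0))
    {n₀ : ℕ} (hn₀ : 0 < n₀)
    (ω₀ : Sample n₀) (hw : sampleWeight p ω₀ ≠ 0) (k : ℕ) :
    Tendsto (fun m => Pr p m (fun ω => ¬ ∃ r, (sGr ω).th k = (sGr ω₀).th k + r)) atTop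
      (nhds 0) := by
  have hw0 : 0 < sampleWeight p ω₀ :=
    lt_of_le_of_ne (Finset.prod_nonneg fun e _ => ew_nonneg p hp e (ω₀ e)) hw.symm
  have hNLlog : ∀ m, Real.log (∏ i ∈ Finset.Icc 1 m, (1 - p i)) = - NL p m := by
    intro m
    rw [Real.log_prod (fun i _ => by have := hp i; linarith)]
    simp [NL, nl]
  have hn : (0 : ℝ) < n₀ := by exact_mod_cast hn₀
  set C : ℝ := 2 * n₀ / sampleWeight p ω₀ with hC
  have hlim : Tendsto (fun m : ℕ => C * (m : ℝ) ^ (-(1 / 2) : ℝ)) atTop (nhds 0) := by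
    have := (tendsto_rpow_neg_atTop (y := 1 / 2) (by norm_num)).comp
      (tendsto_natCast_atTop_atTop (R := ℝ))
    have h := this.const_mul C
    rw [mul_zero] at h
    exact h
  refine squeeze_zero' (Eventually.of_forall fun m => Pr_nonneg p hp m _) ?_ hlim
  have hev : ∀ᶠ m : ℕ in atTop,
      -(1 / (8 * n₀) : ℝ) < Real.log (∏ i ∈ Finset.Icc 1 m, (1 - p i)) / Real.log m :=
    hlog.eventually_const_lt (neg_neg_of_pos (by positivity))
  filter_upwards [hev, eventually_ge_atTop n₀, eventually_ge_atTop 2] with m h1 h2 h3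
  refine (Pr_no_copy p hp hn₀ ω₀ hw k m h2).trans ?_
  have hm0 : (0 : ℝ) < m := by exact_mod_cast (by omega : 0 < m)
  have hlm : 0 < Real.log m := Real.log_pos (by exact_mod_cast (by omega : 1 < m))
  rw [hNLlog, lt_div_iff₀ hlm] at h1
  have hNL := NL_nonneg p hp m
  set x := 2 * n₀ * NL p m with hx
  have hx0 : 0 ≤ x := by positivity
  have hxl : 2 * x ≤ 1 / 2 * Real.log m := by
    have : NL p m ≤ 1 / (8 * n₀) * Real.log m := by linarith
    calc 2 * x = 4 * n₀ * NL p m := by rw [hx]; ring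
      _ ≤ 4 * n₀ * (1 / (8 * n₀) * Real.log m) := by gcongr
      _ = 1 / 2 * Real.log m := by field_simp; norm_num
  have hJ : 0 < m / n₀ := Nat.div_pos h2 hn₀
  have hJ1 : (m : ℝ) ≤ 2 * n₀ * ((m / n₀ : ℕ) : ℝ) := by
    have a := Nat.div_add_mod m n₀
    have b := Nat.mod_lt m hn₀
    have : m ≤ 2 * n₀ * (m / n₀) := by nlinarith
    exact_mod_cast this
  have hJ' : (0 : ℝ) < ((m / n₀ : ℕ) : ℝ) := by exact_mod_cast hJ
  rw [div_le_iff₀ (by positivity)]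
  have hexp : Real.exp (2 * x) ≤ (m : ℝ) ^ (1 / 2 : ℝ) := by
    rw [Real.rpow_def_of_pos hm0]
    apply Real.exp_le_exp.2
    linarith
  calc 1 + x ≤ Real.exp x := by have := Real.add_one_le_exp x; linarith
    _ = Real.exp (2 * x) * Real.exp (-x) := by rw [← Real.exp_add]; ring_nf
    _ ≤ (m : ℝ) ^ (1 / 2 : ℝ) * Real.exp (-x) := by gcongr
    _ = (m : ℝ) ^ (-(1 / 2) : ℝ) * m * Real.exp (-x) := by
      congr 1
      rw [← Real.rpow_add_one hm0.ne']
      norm_num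
    _ ≤ (m : ℝ) ^ (-(1 / 2) : ℝ) * (2 * n₀ * ((m / n₀ : ℕ) : ℝ)) * Real.exp (-x) := by gcongr
    _ = _ := by
      rw [hC]; field_simp

theorem Pr_compl (p : ℕ → ℝ) (m : ℕ) (P : Sample m → Prop) :
    Pr p m P = 1 - Pr p m (fun ω => ¬ P ω) := by
  classical
  have h : ∑ ω : Sample m, sampleWeight p ω = 1 := by
    have := cyl_sum (E := EdgeIdx m) (fun e b => ew p e b) (by intro e; simp [ew]) ∅
      (fun _ => true)
    simpa [sampleWeight_eq] using this
  rw [← h, Pr, Pr, ← Finset.sum_sub_distrib]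
  refine Finset.sum_congr rfl fun ω _ => ?_
  by_cases hP : P ω <;> simp [hP]

theorem Pr_mono (p : ℕ → ℝ) (hp : ∀ i, 0 ≤ p i ∧ p i < 1) (m : ℕ) (P Q : Sample m → Prop)
    (h : ∀ ω, sampleWeight p ω ≠ 0 → P ω → Q ω) : Pr p m P ≤ Pr p m Q := by
  classical
  refine Finset.sum_le_sum fun ω _ => ?_
  have hW : 0 ≤ sampleWeight p ω := Finset.prod_nonneg fun e _ => ew_nonneg p hp e (ω e)
  by_cases h0 : sampleWeight p ω = 0
  · simp [h0]
  · by_cases hP : P ω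
    · rw [if_pos hP, if_pos (h ω h0 hP)]
    · rw [if_neg hP]
      split_ifs
      · exact hW
      · exact le_rfl

theorem Pr_union {α : Type*} (p : ℕ → ℝ) (hp : ∀ i, 0 ≤ p i ∧ p i < 1) (m : ℕ) (T : Finset α)
    (P : α → Sample m → Prop) :
    Pr p m (fun ω => ∃ t ∈ T, P t ω) ≤ ∑ t ∈ T, Pr p m (P t) := by
  classical
  unfold Pr
  rw [Finset.sum_comm]
  refine Finset.sum_le_sum fun ω _ => ?_
  have hW : 0 ≤ sampleWeight p ω := Finset.prod_nonneg fun e _ => ew_nonneg p hp e (ω e)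
  have h0 : ∀ t ∈ T, 0 ≤ if P t ω then sampleWeight p ω else 0 := by
    intro t _
    split_ifs
    · exact hW
    · exact le_rfl
  split_ifs with h
  · obtain ⟨t, ht, hP⟩ := h
    have := Finset.single_le_sum h0 ht
    rwa [if_pos hP] at this
  · exact Finset.sum_nonneg h0

/-- If `0 ≤ p i < 1` for all `i` and
`log (∏_{i=1}^n (1 - p i)) / log n → 0`, then for every first-order sentence `ψ` of the
language `L` of graphs, `Prob(n, p̄; ψ)` tends to `0` or to `1` as `n → ∞`. -/
theorem statement_0 (p : ℕ → ℝ) (hp : ∀ i, 0 ≤ p i ∧ p i < 1)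
    (hlog : Tendsto
      (fun n : ℕ => Real.log (∏ i ∈ Finset.Icc 1 n, (1 - p i)) / Real.log n) atTop (nhds 0))
    (ψ : Language.graph.Sentence) :
    Tendsto (fun n => ProbL p n ψ) atTop (nhds 0) ∨
      Tendsto (fun n => ProbL p n ψ) atTop (nhds 1) := by
  classical
  set k := qr ψ with hk
  set T : Set (Th k) := {t | ∃ (n : ℕ) (ω : Sample n), 0 < n ∧ sampleWeight p ω ≠ 0 ∧
    t = (sGr ω).th k} with hT
  set TF : Finset (Th k) := T.toFinite.toFinset with hTF
  have memT : ∀ t, t ∈ TF ↔ ∃ (n : ℕ) (ω : Sample n), 0 < n ∧ sampleWeight p ω ≠ 0 ∧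
      t = (sGr ω).th k := by
    intro t
    simp only [hTF, Set.Finite.mem_toFinset]
    exact Iff.rfl
  -- the exceptional event
  let bad : (m : ℕ) → Sample m → Prop := fun m ω => ∃ t ∈ TF, ¬ ∃ r, (sGr ω).th k = t + r
  have hbad : Tendsto (fun m => Pr p m (bad m)) atTop (nhds 0) := by
    have h1 : Tendsto (fun m => ∑ t ∈ TF, Pr p m (fun ω => ¬ ∃ r, (sGr ω).th k = t + r)) atTop
        (nhds (∑ t ∈ TF, (0 : ℝ))) := by
      refine tendsto_finsetSum _ fun t ht => ?_
      obtain ⟨n, ω₀, hn, hw, rfl⟩ := (memT t).1 ht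
      exact tendsto_no_copy p hp hlog hn ω₀ hw k
    rw [Finset.sum_const_zero] at h1
    exact squeeze_zero (fun m => Pr_nonneg p hp m _) (fun m => Pr_union p hp m TF _) h1
  -- all good graphs have the same theory
  have same : ∀ (n m : ℕ) (ω : Sample n) (ω' : Sample m), 0 < n → 0 < m →
      sampleWeight p ω ≠ 0 → sampleWeight p ω' ≠ 0 → ¬ bad n ω → ¬ bad m ω' →
      (SatL ω ψ ↔ SatL ω' ψ) := by
    intro n m ω ω' hn hm hw hw' hg hg'
    apply satL_of_th
    simp only [bad] at hg hg'
    push Not at hg hg'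
    obtain ⟨r, hr⟩ := hg _ ((memT _).2 ⟨m, ω', hm, hw', rfl⟩)
    obtain ⟨r', hr'⟩ := hg' _ ((memT _).2 ⟨n, ω, hn, hw, rfl⟩)
    exact jtrivial k (Th.absorb k) _ _ r r' hr hr'
  by_cases hex : ∃ (n : ℕ) (ω : Sample n), 0 < n ∧ sampleWeight p ω ≠ 0 ∧ ¬ bad n ω ∧ SatL ω ψ
  · right
    obtain ⟨n, ω, hn, hw, hg, hs⟩ := hex
    have hneg : Tendsto (fun m => Pr p m (fun ω => ¬ SatL ω ψ)) atTop (nhds 0) := by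
      refine squeeze_zero' (Eventually.of_forall fun m => Pr_nonneg p hp m _) ?_ hbad
      filter_upwards [eventually_gt_atTop 0] with m hm
      refine Pr_mono p hp m _ _ fun ω' hw' hs' => ?_
      by_contra hg'
      exact hs' ((same n m ω ω' hn hm hw hw' hg hg').1 hs)
    have := hneg.const_sub 1
    rw [sub_zero] at this
    refine this.congr fun m => ?_
    exact (Pr_compl p m _).symm
  · left
    push Not at hex
    refine squeeze_zero' (Eventually.of_forall fun m => Pr_nonneg p hp m _) ?_ hbad
    filter_upwards [eventually_gt_atTop 0] with m hm
    refine Pr_mono p hp m _ _ fun ω' hw' hs' => ?_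
    by_contra hg'
    exact hex m ω' hm hw' hg' hs'

end RandomGraph
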